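/- arXiv:1711.01964 — 2 statements merged into one kernel-verified Lean document; each statement's English description precedes it below -/
import Mathlib

section
/- Let F_g be the free Lie algebra over a field K of characteristic zero on g ≥ 3 generators x_1, …, x_g. Suppose (u_{ij})_{1≤i,j≤g} is a family of elements of the derived subalgebra [F_g, F_g] with u_{ij} = u_{ji} for all i,j, satisfying [u_{ij}, x_k] + [x_j, u_{ik}] = 0 for all 1 ≤ i,j,k ≤ g. Then u_{ij} = 0 for all i,j (note Z(F_g) = 0). -/
/-!
Fix `i` and let `a j` be the image of `u i j` in the free associative algebra, where the relation
reads `a j * x k + x j * a k = a k * x j + x k * a j`. With at least three generators available,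
comparing the coefficients of words `x l * w * x m` for well chosen `l` and `m` shows that `a j` is
a scalar, and a Lie element that is a scalar vanishes.

It remains to see that the free Lie algebra embeds into the free associative algebra. Dynkin's
right-normed bracketing `x₁ ⋯ xₙ ↦ ⁅x₁, ⁅x₂, …, xₙ⁆⁆` restricts to the Euler derivation of the free
Lie algebra, which multiplies elements of degree `n` by `n`, and so is injective over `ℚ`.
-/

attribute [local instance] LieRing.ofAssociativeRing

section Eigenspaces

open Polynomial

variable {R M ι : Type*} [CommRing R] [AddCommGroup M] [Module R M]

theorem exists_aeval_eq_zero_of_mem_iSup_eigenspace {f : Module.End R M} {μ : ι → R}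
    (hμ : ∀ i, IsUnit (μ i)) {v : M} (hv : v ∈ ⨆ i, f.eigenspace (μ i)) :
    ∃ p : R[X], IsUnit (p.eval 0) ∧ aeval f p v = 0 := by
  induction hv using Submodule.iSup_induction' with
  | mem i v hv =>
    rw [Module.End.mem_eigenspace_iff] at hv
    exact ⟨X - C (μ i), by simpa using hμ i, by simp [hv]⟩
  | zero => exact ⟨1, by simp⟩
  | add v w _ _ hv hw =>
    obtain ⟨p, hp, hpv⟩ := hv
    obtain ⟨q, hq, hqw⟩ := hw
    refine ⟨p * q, by simpa using hp.mul hq, ?_⟩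
    have hpqv : aeval f (p * q) v = 0 := by
      rw [mul_comm, aeval_mul, Module.End.mul_apply, hpv, map_zero]
    have hpqw : aeval f (p * q) w = 0 := by
      rw [aeval_mul, Module.End.mul_apply, hqw, map_zero]
    rw [map_add, hpqv, hpqw, add_zero]

theorem disjoint_ker_iSup_eigenspace (f : Module.End R M) {μ : ι → R} (hμ : ∀ i, IsUnit (μ i)) :
    Disjoint (LinearMap.ker f) (⨆ i, f.eigenspace (μ i)) := by
  refine Submodule.disjoint_def.2 fun v hker hv ↦ ?_
  obtain ⟨p, hp, hpv⟩ := exists_aeval_eq_zero_of_mem_iSup_eigenspace hμ hv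
  have hfv : f v = (0 : R) • v := by simpa using hker
  rwa [Module.End.aeval_apply_of_mem_apply_eq_smul hfv, hp.smul_eq_zero] at hpv

end Eigenspaces

section EigenspacesOfDerivations

variable {R L ι : Type*} [CommRing R] [LieRing L] [LieAlgebra R L] (D : LieDerivation R L L)

theorem lie_mem_eigenspace_add {μ ν : R} {a b : L}
    (ha : a ∈ Module.End.eigenspace (D : Module.End R L) μ)
    (hb : b ∈ Module.End.eigenspace (D : Module.End R L) ν) :
    ⁅a, b⁆ ∈ Module.End.eigenspace (D : Module.End R L) (μ + ν) := by
  rw [Module.End.mem_eigenspace_iff, LieDerivation.coeFn_coe] at *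
  rw [D.apply_lie_eq_add, ha, hb, lie_smul, smul_lie, add_smul, add_comm]

theorem lie_mem_iSup_eigenspace [Add ι] {μ : ι → R} (hμ : ∀ i j, μ (i + j) = μ i + μ j) {a b : L}
    (ha : a ∈ ⨆ i, Module.End.eigenspace (D : Module.End R L) (μ i))
    (hb : b ∈ ⨆ i, Module.End.eigenspace (D : Module.End R L) (μ i)) :
    ⁅a, b⁆ ∈ ⨆ i, Module.End.eigenspace (D : Module.End R L) (μ i) := by
  let bracket : L →ₗ[R] L →ₗ[R] L := LieModule.toEnd R L L
  suffices Submodule.map₂ bracket (⨆ i, Module.End.eigenspace (D : Module.End R L) (μ i))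
      (⨆ i, Module.End.eigenspace (D : Module.End R L) (μ i)) ≤
      ⨆ i, Module.End.eigenspace (D : Module.End R L) (μ i) from
    this (Submodule.apply_mem_map₂ bracket ha hb)
  simp only [Submodule.map₂_iSup_left, Submodule.map₂_iSup_right, iSup_le_iff, Submodule.map₂_le]
  intro j i x hx y hy
  refine Submodule.mem_iSup_of_mem (i + j) ?_
  rw [hμ]
  exact lie_mem_eigenspace_add D hx hy

end EigenspacesOfDerivations

section Dynkin

variable {R X : Type*} [CommRing R]

theorem mem_lieSpan_range_of (a : FreeLieAlgebra R X) :
    a ∈ LieSubalgebra.lieSpan R (FreeLieAlgebra R X) (Set.range (FreeLieAlgebra.of R)) := by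
  set S := LieSubalgebra.lieSpan R (FreeLieAlgebra R X) (Set.range (FreeLieAlgebra.of R))
  let toSpan : FreeLieAlgebra R X →ₗ⁅R⁆ S := FreeLieAlgebra.lift R fun x ↦
    ⟨FreeLieAlgebra.of R x, LieSubalgebra.subset_lieSpan (Set.mem_range_self x)⟩
  have hincl : S.incl.comp toSpan = LieHom.id := by ext x; simp [toSpan]
  have ha : (toSpan a : FreeLieAlgebra R X) = a := DFunLike.congr_fun hincl a
  exact ha ▸ (toSpan a).2

variable (R X) in
/-- The canonical map from the free Lie algebra to the free associative algebra, viewed as a Lie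
algebra under the commutator. -/
noncomputable def freeLieToFreeAlgebra : FreeLieAlgebra R X →ₗ⁅R⁆ FreeAlgebra R X :=
  FreeLieAlgebra.lift R (FreeAlgebra.ι R)

@[simp]
theorem freeLieToFreeAlgebra_of (x : X) :
    freeLieToFreeAlgebra R X (FreeLieAlgebra.of R x) = FreeAlgebra.ι R x :=
  FreeLieAlgebra.lift_of_apply _ x

theorem freeLieToFreeAlgebra_lie (a b : FreeLieAlgebra R X) :
    freeLieToFreeAlgebra R X ⁅a, b⁆ = freeLieToFreeAlgebra R X a * freeLieToFreeAlgebra R X b -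
      freeLieToFreeAlgebra R X b * freeLieToFreeAlgebra R X a := by
  rw [LieHom.map_lie, LieRing.of_associative_ring_bracket]

theorem algebraMapInv_freeLieToFreeAlgebra (a : FreeLieAlgebra R X) :
    FreeAlgebra.algebraMapInv (freeLieToFreeAlgebra R X a) = 0 := by
  have hzero : (FreeAlgebra.algebraMapInv.toLieHom : FreeAlgebra R X →ₗ⁅R⁆ R).comp
      (freeLieToFreeAlgebra R X) = 0 := by
    ext x
    simp [FreeAlgebra.algebraMapInv]
  exact DFunLike.congr_fun hzero a

/-- The operator `(v, c) ↦ (⁅x, v⁆ + c • x, 0)`. The second component records the constant term, so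
that letting the letters of a word act in turn on `(0, 1)` produces its right-normed bracket. -/
def dynkinOperator {L : Type*} [LieRing L] [LieAlgebra R L] (x : L) : Module.End R (L × R) :=
  LinearMap.inl R L R ∘ₗ (LieAlgebra.ad R L x).coprod (LinearMap.toSpanSingleton R L x)

theorem dynkinOperator_apply {L : Type*} [LieRing L] [LieAlgebra R L] (x : L) (p : L × R) :
    dynkinOperator x p = (⁅x, p.1⁆ + p.2 • x, 0) := by
  simp [dynkinOperator]

variable (R X) in
/-- The action of the free associative algebra on `FreeLieAlgebra R X × R` in which generators act
by Dynkin operators. -/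
noncomputable def dynkinAction : FreeAlgebra R X →ₐ[R] Module.End R (FreeLieAlgebra R X × R) :=
  FreeAlgebra.lift R fun x ↦ dynkinOperator (FreeLieAlgebra.of R x)

variable (R X) in
/-- Dynkin's right-normed bracketing `x₁ x₂ ⋯ xₙ ↦ ⁅x₁, ⁅x₂, …, xₙ⁆⁆`, which sends `1` to `0`. -/
noncomputable def dynkinBracketing : FreeAlgebra R X →ₗ[R] FreeLieAlgebra R X :=
  LinearMap.fst R _ _ ∘ₗ LinearMap.applyₗ (0, 1) ∘ₗ (dynkinAction R X).toLinearMap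

theorem dynkinBracketing_apply (w : FreeAlgebra R X) :
    dynkinBracketing R X w = (dynkinAction R X w (0, 1)).1 :=
  rfl

theorem dynkinBracketing_ι (x : X) :
    dynkinBracketing R X (FreeAlgebra.ι R x) = FreeLieAlgebra.of R x := by
  simp [dynkinBracketing_apply, dynkinAction, dynkinOperator_apply]

theorem dynkinAction_freeLieToFreeAlgebra (a : FreeLieAlgebra R X) (p : FreeLieAlgebra R X × R) :
    dynkinAction R X (freeLieToFreeAlgebra R X a) p =
      (⁅a, p.1⁆ + p.2 • dynkinBracketing R X (freeLieToFreeAlgebra R X a), 0) := by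
  induction mem_lieSpan_range_of a using LieSubalgebra.lieSpan_induction generalizing p with
  | mem a ha =>
    obtain ⟨x, rfl⟩ := ha
    rw [freeLieToFreeAlgebra_of, dynkinBracketing_ι, dynkinAction, FreeAlgebra.lift_ι_apply,
      dynkinOperator_apply]
  | zero => simp [Prod.zero_eq_mk]
  | add a b _ _ ha hb =>
    simp only [map_add, LinearMap.add_apply, ha, hb, Prod.mk_add_mk, add_lie, smul_add, add_zero]
    rw [add_add_add_comm]
  | smul c a _ ha => simp [ha, smul_comm c p.2]
  | lie a b _ _ ha hb =>
    have hleibniz : dynkinBracketing R X (freeLieToFreeAlgebra R X ⁅a, b⁆) =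
        ⁅a, dynkinBracketing R X (freeLieToFreeAlgebra R X b)⁆ -
          ⁅b, dynkinBracketing R X (freeLieToFreeAlgebra R X a)⁆ := by
      rw [dynkinBracketing_apply, freeLieToFreeAlgebra_lie]
      simp [ha, hb]
    rw [hleibniz, freeLieToFreeAlgebra_lie]
    simp only [map_sub, map_mul, LinearMap.sub_apply, Module.End.mul_apply, ha, hb, zero_smul,
      add_zero, Prod.mk_sub_mk, sub_self, lie_add, lie_smul, lie_lie, smul_sub]
    rw [add_sub_add_comm]

variable (R X) in
/-- The Euler derivation of the free Lie algebra, i.e. the derivation fixing every generator;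
it multiplies an element of degree `n` by `n`. -/
noncomputable def eulerDerivation : LieDerivation R (FreeLieAlgebra R X) (FreeLieAlgebra R X) where
  toLinearMap := dynkinBracketing R X ∘ₗ (freeLieToFreeAlgebra R X : _ →ₗ[R] FreeAlgebra R X)
  leibniz' a b := by
    simp only [LinearMap.comp_apply, LieHom.coe_toLinearMap]
    rw [dynkinBracketing_apply, freeLieToFreeAlgebra_lie]
    simp [dynkinAction_freeLieToFreeAlgebra]

theorem eulerDerivation_apply (a : FreeLieAlgebra R X) :
    eulerDerivation R X a = dynkinBracketing R X (freeLieToFreeAlgebra R X a) :=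
  rfl

theorem iSup_eigenspace_eulerDerivation :
    ⨆ n : ℕ+, Module.End.eigenspace (eulerDerivation R X : Module.End R (FreeLieAlgebra R X))
      ((n : ℕ) : R) = ⊤ := by
  refine Submodule.eq_top_iff'.2 fun a ↦ ?_
  induction mem_lieSpan_range_of a using LieSubalgebra.lieSpan_induction with
  | mem a ha =>
    obtain ⟨x, rfl⟩ := ha
    refine Submodule.mem_iSup_of_mem 1 (Module.End.mem_eigenspace_iff.2 ?_)
    simp [eulerDerivation_apply, dynkinBracketing_ι]
  | zero => exact zero_mem _
  | add a b _ _ ha hb => exact add_mem ha hb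
  | smul c a _ ha => exact Submodule.smul_mem _ c ha
  | lie a b _ _ ha hb =>
    exact lie_mem_iSup_eigenspace _ (fun m n ↦ by simp) ha hb

variable [Algebra ℚ R]

theorem eulerDerivation_injective : Function.Injective (eulerDerivation R X) := by
  have hunit (n : ℕ+) : IsUnit ((n : ℕ) : R) := by
    simpa using (Nat.cast_ne_zero (R := ℚ).2 n.ne_zero).isUnit.map (algebraMap ℚ R)
  have hdisj := disjoint_ker_iSup_eigenspace
    (eulerDerivation R X : Module.End R (FreeLieAlgebra R X)) hunit
  rw [iSup_eigenspace_eulerDerivation, disjoint_top] at hdisj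
  exact LinearMap.ker_eq_bot.1 hdisj

theorem freeLieToFreeAlgebra_injective : Function.Injective (freeLieToFreeAlgebra R X) := by
  have hcomp : Function.Injective (dynkinBracketing R X ∘ freeLieToFreeAlgebra R X) :=
    eulerDerivation_injective
  exact hcomp.of_comp

end Dynkin

section AssociativeSystem

open MonoidAlgebra

variable {R X : Type*}

section Semiring

variable [Semiring R]

theorem coeff_mul_single_of [DecidableEq X] (a : R[FreeMonoid X]) (r : R)
    (w : FreeMonoid X) (k m : X) :
    (a * single (FreeMonoid.of k) r).coeff (w * FreeMonoid.of m) =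
      if k = m then a.coeff w * r else 0 := by
  split_ifs with hkm
  · rw [hkm, coeff_mul_single_mul]
  · refine coeff_mul_single_of_forall_mul_ne _ _ fun v hv ↦ hkm ?_
    simpa using List.append_inj_right' (congrArg FreeMonoid.toList hv) rfl

theorem coeff_single_of_mul [DecidableEq X] (a : R[FreeMonoid X]) (r : R)
    (w : FreeMonoid X) (k l : X) :
    (single (FreeMonoid.of k) r * a).coeff (FreeMonoid.of l * w) =
      if k = l then r * a.coeff w else 0 := by
  split_ifs with hkl
  · rw [hkl, coeff_single_mul_mul]
  · refine coeff_single_mul_of_forall_mul_ne _ _ fun v hv ↦ hkl ?_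
    simpa using List.append_inj_left (congrArg FreeMonoid.toList hv) rfl

/-- Solutions of the system `⁅a j, x k⁆ + ⁅x j, a k⁆ = 0` in the free associative algebra, modelled
as the monoid algebra of words, with the commutators expanded and the signs moved across. -/
def IsAssociativeSolution (a : X → R[FreeMonoid X]) : Prop :=
  ∀ j k, a j * single (.of k) 1 + single (.of j) 1 * a k =
    a k * single (.of j) 1 + single (.of k) 1 * a j

namespace IsAssociativeSolution

variable {a : X → R[FreeMonoid X]}

theorem coeff_of_mul_mul_of [DecidableEq X] (ha : IsAssociativeSolution a) (j k l m : X)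
    (w : FreeMonoid X) :
    ((if k = m then (a j).coeff (.of l * w) else 0) +
      if j = l then (a k).coeff (w * .of m) else 0) =
    (if j = m then (a k).coeff (.of l * w) else 0) +
      if k = l then (a j).coeff (w * .of m) else 0 := by
  have hcoeff := congrArg (fun b ↦ b.coeff (.of l * w * .of m)) (ha j k)
  simp only [coeff_add, Finsupp.add_apply, coeff_mul_single_of, mul_one] at hcoeff
  simpa only [mul_assoc, coeff_single_of_mul, one_mul] using hcoeff

theorem coeff_of_mul_eq_zero (ha : IsAssociativeSolution a) (hX : 3 ≤ ENat.card X) {j l : X}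
    (hlj : l ≠ j) (w : FreeMonoid X) :
    (a j).coeff (.of l * w) = 0 := by
  classical
  obtain ⟨k, hkj, hkl⟩ := ENat.exists_ne_ne_of_three_le hX j l
  simpa [hlj.symm, hkj.symm, hkl] using ha.coeff_of_mul_mul_of j k l k w

end IsAssociativeSolution

end Semiring

namespace IsAssociativeSolution

variable [Ring R] {a : X → R[FreeMonoid X]}

theorem coeff_of_mul_eq_neg (ha : IsAssociativeSolution a) {j k : X} (hkj : k ≠ j)
    (w : FreeMonoid X) :
    (a j).coeff (.of j * w) = -(a k).coeff (w * .of k) := by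
  classical
  rw [eq_neg_iff_add_eq_zero]
  simpa [hkj, hkj.symm] using ha.coeff_of_mul_mul_of j k j k w

theorem coeff_of_eq_zero (ha : IsAssociativeSolution a) (hX : 3 ≤ ENat.card X)
    (h2 : IsLeftRegular (2 : R)) (j : X) :
    (a j).coeff (.of j) = 0 := by
  have hneg {j k : X} (hkj : k ≠ j) : (a j).coeff (.of j) = -(a k).coeff (.of k) := by
    simpa using ha.coeff_of_mul_eq_neg hkj 1
  obtain ⟨k, hkj, -⟩ := ENat.exists_ne_ne_of_three_le hX j j
  obtain ⟨m, hmj, hmk⟩ := ENat.exists_ne_ne_of_three_le hX j k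
  have hself : (a j).coeff (.of j) = -(a j).coeff (.of j) :=
    calc (a j).coeff (.of j) = -(a k).coeff (.of k) := hneg hkj
      _ = (a m).coeff (.of m) := by rw [hneg hmk, neg_neg]
      _ = -(a j).coeff (.of j) := hneg hmj.symm
  refine h2 ?_
  simp only [two_mul, mul_zero]
  exact eq_neg_iff_add_eq_zero.1 hself

theorem coeff_eq_zero_of_ne_one (ha : IsAssociativeSolution a) (hX : 3 ≤ ENat.card X)
    (h2 : IsLeftRegular (2 : R)) (j : X) {w : FreeMonoid X} (hw : w ≠ 1) :
    (a j).coeff w = 0 := by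
  cases w using FreeMonoid.casesOn with
  | one => exact absurd rfl hw
  | of_mul l w =>
    obtain hlj | rfl := ne_or_eq l j
    · exact ha.coeff_of_mul_eq_zero hX hlj w
    cases w using FreeMonoid.casesOn with
    | one => simpa using ha.coeff_of_eq_zero hX h2 l
    | of_mul p w =>
      obtain ⟨k, hkl, hkp⟩ := ENat.exists_ne_ne_of_three_le hX l p
      rw [ha.coeff_of_mul_eq_neg hkl, mul_assoc, ha.coeff_of_mul_eq_zero hX hkp.symm, neg_zero]

end IsAssociativeSolution

end AssociativeSystem

theorem mem_range_algebraMap_of_lie_add_lie_eq_zero {R X : Type*} [CommRing R]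
    (h2 : IsLeftRegular (2 : R)) (hX : 3 ≤ ENat.card X) {a : X → FreeAlgebra R X}
    (ha : ∀ j k, ⁅a j, FreeAlgebra.ι R k⁆ + ⁅FreeAlgebra.ι R j, a k⁆ = 0) (j : X) :
    a j ∈ Set.range (algebraMap R (FreeAlgebra R X)) := by
  let e := FreeAlgebra.equivMonoidAlgebraFreeMonoid (R := R) (X := X)
  have he_ι (x : X) : e (FreeAlgebra.ι R x) = MonoidAlgebra.single (.of x) 1 := by
    simp [e, FreeAlgebra.equivMonoidAlgebraFreeMonoid]
  have hea : IsAssociativeSolution (fun i ↦ e (a i)) := by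
    intro j k
    have hcomm := congrArg e (ha j k)
    simp only [LieRing.of_associative_ring_bracket, map_add, map_sub, map_mul, map_zero,
      he_ι] at hcomm
    rw [← sub_eq_zero, ← hcomm]
    abel
  refine ⟨(e (a j)).coeff 1, e.injective ?_⟩
  ext w
  rw [AlgEquiv.commutes]
  obtain rfl | hw := eq_or_ne w 1
  · simp
  · rw [hea.coeff_eq_zero_of_ne_one hX h2 j hw]
    simp [hw]

theorem free_lie_system_solutions_trivial_general {R X : Type*} [CommRing R] [Algebra ℚ R]
    (hX : 3 ≤ ENat.card X) {u : X → FreeLieAlgebra R X}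
    (hu : ∀ j k, ⁅u j, FreeLieAlgebra.of R k⁆ + ⁅FreeLieAlgebra.of R j, u k⁆ = 0) (j : X) :
    u j = 0 := by
  have hsystem (j k : X) : ⁅freeLieToFreeAlgebra R X (u j), FreeAlgebra.ι R k⁆ +
      ⁅FreeAlgebra.ι R j, freeLieToFreeAlgebra R X (u k)⁆ = 0 := by
    simpa only [map_add, LieHom.map_lie, freeLieToFreeAlgebra_of, map_zero] using
      congrArg (freeLieToFreeAlgebra R X) (hu j k)
  have h2 : IsUnit (2 : R) := by
    simpa only [map_ofNat] using (IsUnit.mk0 (2 : ℚ) two_ne_zero).map (algebraMap ℚ R)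
  obtain ⟨c, hc⟩ := mem_range_algebraMap_of_lie_add_lie_eq_zero h2.isRegular.left hX hsystem j
  have hc_zero : c = 0 := by
    rw [← FreeAlgebra.algebraMap_leftInverse (X := X) c, hc, algebraMapInv_freeLieToFreeAlgebra]
  refine freeLieToFreeAlgebra_injective ?_
  rw [← hc, hc_zero, map_zero, map_zero]

/-- Let `F_g` be the free Lie algebra on `g ≥ 3` generators over a field of characteristic
zero. Any symmetric family `(u i j)` of elements of the derived subalgebra `[F_g, F_g]`
satisfying `⁅u i j, x k⁆ + ⁅x j, u i k⁆ = 0` for all `i, j, k` is identically zero. -/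
theorem free_lie_system_solutions_trivial
    (K : Type*) [Field K] [CharZero K] (g : ℕ) (hg : 3 ≤ g)
    (u : Fin g → Fin g → FreeLieAlgebra K (Fin g))
    (hder : ∀ i j, u i j ∈
      ⁅(⊤ : LieIdeal K (FreeLieAlgebra K (Fin g))), (⊤ : LieIdeal K (FreeLieAlgebra K (Fin g)))⁆)
    (hsymm : ∀ i j, u i j = u j i)
    (heq : ∀ i j k, ⁅u i j, FreeLieAlgebra.of K k⁆ + ⁅FreeLieAlgebra.of K j, u i k⁆ = 0) :
    ∀ i j, u i j = 0 := fun i ↦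
  free_lie_system_solutions_trivial_general (by simpa using hg) (heq i)
end

section
/- Let F_{g,c} be the free-nilpotent Lie algebra over a field K of characteristic zero on g ≥ 3 generators x_1, …, x_g of nilpotency class c ≥ 2. Suppose (u_{ij})_{1≤i,j≤g} is a family of elements of the derived subalgebra [F_{g,c}, F_{g,c}] with u_{ij} = u_{ji} for all i,j, satisfying [u_{ij}, x_k] + [x_j, u_{ik}] = 0 for all 1 ≤ i,j,k ≤ g. Then u_{ij} ∈ Z(F_{g,c}) for all i,j. -/
abbrev FreeNilpotentLieAlgebra (K : Type*) [Field K] (g c : ℕ) :=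
  FreeLieAlgebra K (Fin g) ⧸
    LieModule.lowerCentralSeries K (FreeLieAlgebra K (Fin g)) (FreeLieAlgebra K (Fin g)) c

/-!
Fix a row `(u i j)_j`, lift it to elements `v j` of the free Lie algebra `L`, and embed `L` into the
free associative algebra, written on words. In `v j * k - k * v j + j * v k - v k * j`, which is
zero modulo long words, look at a word `k w m` with `k` different from `j` and `m`: only `k * v j`
and `v k * j` contribute, and the latter only if `m = j`. So the coefficient of `v j` at a short
word `w m` vanishes for `m ≠ j`, and for `m = j` it is minus the coefficient of `v k` at `k w`, to
which the first case applies when `k` also differs from the last letter of `w`. If `w` is empty,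
going round a cycle of three letters shows that the coefficient is its own negative.

It remains to know that an element of `L` whose associative expansion starts in degree `n + 1` lies
in the `n`-th term of the lower central series. This is the Dynkin–Specht–Wever argument: rewriting
words as right-normed brackets is a derivation of `L` which fixes the generators, so it acts as
multiplication by `n + 1` on the `n`-th graded piece of the lower central series.
-/

namespace FreeNilpotentLieAlgebra

open LieModule

section LowerCentralSeries

variable {R L M : Type*} [CommRing R] [LieRing L] [LieAlgebra R L]
  [AddCommGroup M] [Module R M] [LieRingModule L M]

theorem lie_mem_lowerCentralSeries_succ {n : ℕ} {m : M} (x : L)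
    (hm : m ∈ lowerCentralSeries R L M n) : ⁅x, m⁆ ∈ lowerCentralSeries R L M (n + 1) := by
  rw [lowerCentralSeries_succ]
  exact LieSubmodule.lie_mem_lie (LieSubmodule.mem_top x) hm

variable [LieModule R L M]

theorem toSubmodule_lowerCentralSeries_succ_le_iff {n : ℕ} {S : Submodule R M} :
    (lowerCentralSeries R L M (n + 1)).toSubmodule ≤ S ↔
      ∀ x : L, ∀ m ∈ lowerCentralSeries R L M n, ⁅x, m⁆ ∈ S := by
  refine ⟨fun h x m hm => h (lie_mem_lowerCentralSeries_succ x hm), fun h => ?_⟩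
  rw [lowerCentralSeries_succ, LieSubmodule.lieIdeal_oper_eq_linear_span', Submodule.span_le]
  rintro _ ⟨x, -, m, hm, rfl⟩
  exact h x m hm

theorem lie_mem_lowerCentralSeries_add {a b : ℕ} {x : L} {m : M}
    (hx : x ∈ lowerCentralSeries R L L a) (hm : m ∈ lowerCentralSeries R L M b) :
    ⁅x, m⁆ ∈ lowerCentralSeries R L M (a + b + 1) := by
  induction a generalizing x m b with
  | zero => simpa using lie_mem_lowerCentralSeries_succ x hm
  | succ a ih =>
    let S : Submodule R L := (lowerCentralSeries R L M (a + 1 + b + 1)).toSubmodule.comap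
      ((toEnd R L M : L →ₗ[R] Module.End R M).flip m)
    refine (toSubmodule_lowerCentralSeries_succ_le_iff (S := S)).2 (fun y z hz => ?_) hx
    change ⁅⁅y, z⁆, m⁆ ∈ lowerCentralSeries R L M (a + 1 + b + 1)
    rw [lie_lie, Nat.add_right_comm a 1 b]
    exact sub_mem (lie_mem_lowerCentralSeries_succ y (ih hz hm))
      (ih hz (lie_mem_lowerCentralSeries_succ y hm))

theorem mk_mem_center_of_mem_lowerCentralSeries {c : ℕ} {y : L}
    (hy : y ∈ lowerCentralSeries R L L (c - 1)) :
    LieSubmodule.Quotient.mk y ∈ LieAlgebra.center R (L ⧸ lowerCentralSeries R L L c) := by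
  rw [mem_maxTrivSubmodule]
  intro x
  obtain ⟨x, rfl⟩ := LieSubmodule.Quotient.surjective_mk' _ x
  refine (LieSubmodule.Quotient.mk_eq_zero' (N := lowerCentralSeries R L L c)).2 ?_
  exact antitone_lowerCentralSeries R L L le_tsub_add (lie_mem_lowerCentralSeries_succ x hy)

end LowerCentralSeries

variable {R ι : Type*} [CommRing R]

local notation "γ" => lowerCentralSeries R (FreeLieAlgebra R ι) (FreeLieAlgebra R ι)

theorem lieSpan_range_of :
    LieSubalgebra.lieSpan R (FreeLieAlgebra R ι) (Set.range (FreeLieAlgebra.of R)) = ⊤ := by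
  set S := LieSubalgebra.lieSpan R (FreeLieAlgebra R ι) (Set.range (FreeLieAlgebra.of R))
  let retraction : FreeLieAlgebra R ι →ₗ⁅R⁆ S :=
    FreeLieAlgebra.lift R fun i => ⟨_, LieSubalgebra.subset_lieSpan (Set.mem_range_self i)⟩
  have incl_comp_retraction : S.incl.comp retraction = LieHom.id :=
    FreeLieAlgebra.hom_ext fun i => by simp [retraction]
  refine eq_top_iff.2 fun p _ => ?_
  rw [← LieHom.id_apply (R := R) p, ← incl_comp_retraction]
  exact (retraction p).2

theorem freeLieAlgebra_induction {motive : FreeLieAlgebra R ι → Prop} (p : FreeLieAlgebra R ι)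
    (of : ∀ i, motive (FreeLieAlgebra.of R i)) (zero : motive 0)
    (add : ∀ p q, motive p → motive q → motive (p + q))
    (smul : ∀ (r : R) (p), motive p → motive (r • p))
    (lie : ∀ p q, motive p → motive q → motive ⁅p, q⁆) : motive p := by
  have hp : p ∈ LieSubalgebra.lieSpan R (FreeLieAlgebra R ι) (Set.range (FreeLieAlgebra.of R)) :=
    lieSpan_range_of (R := R) ▸ LieSubalgebra.mem_top p
  induction hp using LieSubalgebra.lieSpan_induction with
  | mem _ h => obtain ⟨i, rfl⟩ := h; exact of i
  | zero => exact zero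
  | add p q _ _ hp hq => exact add p q hp hq
  | smul r p _ hp => exact smul r p hp
  | lie p q _ _ hp hq => exact lie p q hp hq

attribute [local instance] LieRing.ofAssociativeRing

section WordAlgebra

variable (R ι) in
/-- The free associative algebra on `ι`, realised as the monoid algebra of words so that elements
have coefficients. -/
abbrev WordAlgebra := MonoidAlgebra R (FreeMonoid ι)

variable (R) in
/-- The generator of the word algebra given by a one-letter word. -/
noncomputable abbrev letter (i : ι) : WordAlgebra R ι := MonoidAlgebra.single (FreeMonoid.of i) 1

variable (R ι) in
/-- The decreasing filtration of the word algebra by word length: its `n`-th term consists of the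
elements all of whose words have length at least `n`. -/
noncomputable def wordFiltration (n : ℕ) : Submodule R (WordAlgebra R ι) :=
  MonoidAlgebra.supported R R {w | n ≤ w.length}

theorem mem_wordFiltration_iff {n : ℕ} {a : WordAlgebra R ι} :
    a ∈ wordFiltration R ι n ↔ ∀ w : FreeMonoid ι, w.length < n → a.coeff w = 0 := by
  simp [wordFiltration, MonoidAlgebra.mem_supported']

theorem wordFiltration_eq_span (n : ℕ) : wordFiltration R ι n =
    Submodule.span R ((fun w => MonoidAlgebra.single w 1) '' {w | n ≤ w.length}) :=
  MonoidAlgebra.supported_eq_span_single R _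

theorem wordFiltration_antitone : Antitone (wordFiltration R ι) := fun _ _ hmn =>
  MonoidAlgebra.supported_mono fun _ hw => hmn.trans hw

theorem mul_mem_wordFiltration_add {m n : ℕ} {a b : WordAlgebra R ι}
    (ha : a ∈ wordFiltration R ι m) (hb : b ∈ wordFiltration R ι n) :
    a * b ∈ wordFiltration R ι (m + n) := by
  classical
  intro w hw
  obtain ⟨u, hu, v, hv, rfl⟩ := Finset.mem_mul.1 (MonoidAlgebra.support_coeff_mul_subset a b hw)
  simpa only [Set.mem_ofPred_eq, FreeMonoid.length_mul] using add_le_add (ha hu) (hb hv)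

theorem lie_mem_wordFiltration_add {m n : ℕ} {a b : WordAlgebra R ι}
    (ha : a ∈ wordFiltration R ι m) (hb : b ∈ wordFiltration R ι n) :
    ⁅a, b⁆ ∈ wordFiltration R ι (m + n) :=
  sub_mem (mul_mem_wordFiltration_add ha hb) (add_comm n m ▸ mul_mem_wordFiltration_add hb ha)

theorem letter_mem_wordFiltration_one (i : ι) : letter R i ∈ wordFiltration R ι 1 :=
  wordFiltration_eq_span (R := R) (ι := ι) 1 ▸
    Submodule.subset_span ⟨FreeMonoid.of i, (FreeMonoid.length_of i).ge, rfl⟩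

theorem coeff_mul_letter_of_ne (a : WordAlgebra R ι) (w : FreeMonoid ι) {i j : ι} (h : i ≠ j) :
    (a * letter R j).coeff (w * FreeMonoid.of i) = 0 :=
  MonoidAlgebra.coeff_mul_single_of_forall_mul_ne _ _ fun _ heq =>
    h (List.singleton_injective (List.append_inj' heq rfl).2).symm

theorem coeff_letter_mul_of_ne (a : WordAlgebra R ι) (w : FreeMonoid ι) {i j : ι} (h : i ≠ j) :
    (letter R j * a).coeff (FreeMonoid.of i * w) = 0 :=
  MonoidAlgebra.coeff_single_mul_of_forall_mul_ne _ _ fun _ heq =>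
    h (List.singleton_injective (List.append_inj heq rfl).1).symm

variable (R ι) in
/-- The expansion of Lie elements as combinations of words. -/
noncomputable def toWordAlgebra : FreeLieAlgebra R ι →ₗ⁅R⁆ WordAlgebra R ι :=
  FreeLieAlgebra.lift R (letter R)

@[simp]
theorem toWordAlgebra_of (i : ι) : toWordAlgebra R ι (FreeLieAlgebra.of R i) = letter R i :=
  FreeLieAlgebra.lift_of_apply _ i

theorem toWordAlgebra_mem_wordFiltration_one (p : FreeLieAlgebra R ι) :
    toWordAlgebra R ι p ∈ wordFiltration R ι 1 := by
  induction p using freeLieAlgebra_induction with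
  | of i => simpa using letter_mem_wordFiltration_one i
  | zero => simp
  | add p q hp hq => simpa using add_mem hp hq
  | smul r p hp => simpa using Submodule.smul_mem _ r hp
  | lie p q hp hq =>
    rw [LieHom.map_lie]
    exact wordFiltration_antitone one_le_two (lie_mem_wordFiltration_add hp hq)

theorem toWordAlgebra_mem_wordFiltration {n : ℕ} {p : FreeLieAlgebra R ι} (hp : p ∈ γ n) :
    toWordAlgebra R ι p ∈ wordFiltration R ι (n + 1) := by
  induction n generalizing p with
  | zero => exact toWordAlgebra_mem_wordFiltration_one p
  | succ n ih =>
    refine (toSubmodule_lowerCentralSeries_succ_le_iff (S := (wordFiltration R ι (n + 2)).comap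
      (toWordAlgebra R ι : FreeLieAlgebra R ι →ₗ[R] WordAlgebra R ι))).2 (fun a b hb => ?_) hp
    rw [Submodule.mem_comap, LieHom.coe_toLinearMap, LieHom.map_lie]
    simpa only [Nat.add_comm 1] using
      lie_mem_wordFiltration_add (toWordAlgebra_mem_wordFiltration_one a) (ih hb)

end WordAlgebra

section DynkinSpechtWever

variable (R) in
/-- The right-normed bracket `⁅i₁, ⁅i₂, … ⁅iₙ₋₁, iₙ⁆⁆⁆` of a word, with value `0` on the empty
word. -/
noncomputable def rightNormedBracket : List ι → FreeLieAlgebra R ι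
  | [] => 0
  | [i] => FreeLieAlgebra.of R i
  | i :: j :: l => ⁅FreeLieAlgebra.of R i, rightNormedBracket (j :: l)⁆

theorem rightNormedBracket_cons_mem_lowerCentralSeries (i : ι) (l : List ι) :
    rightNormedBracket R (i :: l) ∈ γ l.length := by
  induction l generalizing i with
  | nil => simp
  | cons j l ih => exact lie_mem_lowerCentralSeries_succ _ (ih j)

variable (R ι) in
/-- The Dynkin operator: the linear extension of `rightNormedBracket` to the word algebra. -/
noncomputable def dynkin : WordAlgebra R ι →ₗ[R] FreeLieAlgebra R ι :=
  (MonoidAlgebra.basis (FreeMonoid ι) R).constr R fun w => rightNormedBracket R w.toList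

@[simp]
theorem dynkin_single_one (w : FreeMonoid ι) :
    dynkin R ι (MonoidAlgebra.single w 1) = rightNormedBracket R w.toList := by
  rw [← MonoidAlgebra.basis_apply, dynkin, Module.Basis.constr_basis]

theorem dynkin_mem_lowerCentralSeries {n : ℕ} {a : WordAlgebra R ι}
    (ha : a ∈ wordFiltration R ι (n + 1)) : dynkin R ι a ∈ γ n := by
  rw [wordFiltration_eq_span] at ha
  refine (Submodule.span_le (p := (γ n).toSubmodule.comap (dynkin R ι))).2 ?_ ha
  rintro _ ⟨w, hw, rfl⟩
  simp only [SetLike.mem_coe, Submodule.mem_comap, dynkin_single_one]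
  cases w with
  | one => simp at hw
  | of_mul i w =>
    exact antitone_lowerCentralSeries R _ _ (Nat.le_of_succ_le_succ hw)
      (rightNormedBracket_cons_mem_lowerCentralSeries i w.toList)

theorem dynkin_letter_mul (i : ι) {a : WordAlgebra R ι} (ha : a ∈ wordFiltration R ι 1) :
    dynkin R ι (letter R i * a) = ⁅FreeLieAlgebra.of R i, dynkin R ι a⁆ := by
  rw [wordFiltration_eq_span] at ha
  refine LinearMap.eqOn_span (f := dynkin R ι ∘ₗ LinearMap.mulLeft R (letter R i))
    (g := LieAlgebra.ad R _ (FreeLieAlgebra.of R i) ∘ₗ dynkin R ι) ?_ ha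
  rintro _ ⟨w, hw, rfl⟩
  cases w with
  | one => simp at hw
  | of_mul j w => simp [rightNormedBracket]

theorem dynkin_toWordAlgebra_mul (p : FreeLieAlgebra R ι) {a : WordAlgebra R ι}
    (ha : a ∈ wordFiltration R ι 1) :
    dynkin R ι (toWordAlgebra R ι p * a) = ⁅p, dynkin R ι a⁆ := by
  induction p using freeLieAlgebra_induction generalizing a with
  | of i => rw [toWordAlgebra_of, dynkin_letter_mul i ha]
  | zero => simp
  | add p q hp hq => simp [add_mul, hp ha, hq ha]
  | smul r p hp => simp [hp ha]
  | lie p q hp hq =>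
    have mul_mem (p : FreeLieAlgebra R ι) : toWordAlgebra R ι p * a ∈ wordFiltration R ι 1 :=
      wordFiltration_antitone one_le_two
        (mul_mem_wordFiltration_add (toWordAlgebra_mem_wordFiltration_one p) ha)
    rw [LieHom.map_lie, LieRing.of_associative_ring_bracket, sub_mul, mul_assoc, mul_assoc,
      map_sub, hp (mul_mem q), hq (mul_mem p), hp ha, hq ha, lie_lie]

theorem dynkin_toWordAlgebra_lie (p q : FreeLieAlgebra R ι) :
    dynkin R ι (toWordAlgebra R ι ⁅p, q⁆) =
      ⁅p, dynkin R ι (toWordAlgebra R ι q)⁆ + ⁅dynkin R ι (toWordAlgebra R ι p), q⁆ := by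
  rw [LieHom.map_lie, LieRing.of_associative_ring_bracket, map_sub,
    dynkin_toWordAlgebra_mul p (toWordAlgebra_mem_wordFiltration_one q),
    dynkin_toWordAlgebra_mul q (toWordAlgebra_mem_wordFiltration_one p),
    ← lie_skew q, sub_neg_eq_add]

theorem dynkin_toWordAlgebra_sub_self_mem (p : FreeLieAlgebra R ι) :
    dynkin R ι (toWordAlgebra R ι p) - p ∈ γ 1 := by
  induction p using freeLieAlgebra_induction with
  | of i => simp [rightNormedBracket]
  | zero => simp
  | add p q hp hq => simpa [add_sub_add_comm] using add_mem hp hq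
  | smul r p hp => simpa [smul_sub] using (γ 1).smul_mem r hp
  | lie p q _ _ =>
    have lie_mem (a b : FreeLieAlgebra R ι) : ⁅a, b⁆ ∈ γ 1 :=
      lie_mem_lowerCentralSeries_succ a (LieSubmodule.mem_top b)
    rw [dynkin_toWordAlgebra_lie]
    exact sub_mem (add_mem (lie_mem _ _) (lie_mem _ _)) (lie_mem _ _)

theorem dynkin_toWordAlgebra_sub_smul_mem {n : ℕ} {p : FreeLieAlgebra R ι} (hp : p ∈ γ n) :
    dynkin R ι (toWordAlgebra R ι p) - ((n + 1 : ℕ) : R) • p ∈ γ (n + 1) := by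
  induction n generalizing p with
  | zero => simpa using dynkin_toWordAlgebra_sub_self_mem p
  | succ n ih =>
    let S : Submodule R (FreeLieAlgebra R ι) := (γ (n + 2)).toSubmodule.comap
      (dynkin R ι ∘ₗ (toWordAlgebra R ι : FreeLieAlgebra R ι →ₗ[R] WordAlgebra R ι) -
        ((n + 2 : ℕ) : R) • LinearMap.id)
    refine (toSubmodule_lowerCentralSeries_succ_le_iff (S := S)).2 (fun a b hb => ?_) hp
    change dynkin R ι (toWordAlgebra R ι ⁅a, b⁆) - ((n + 2 : ℕ) : R) • ⁅a, b⁆ ∈ γ (n + 2)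
    have leibniz : dynkin R ι (toWordAlgebra R ι ⁅a, b⁆) - ((n + 2 : ℕ) : R) • ⁅a, b⁆ =
        ⁅a, dynkin R ι (toWordAlgebra R ι b) - ((n + 1 : ℕ) : R) • b⁆ +
          ⁅dynkin R ι (toWordAlgebra R ι a) - a, b⁆ := by
      rw [dynkin_toWordAlgebra_lie, lie_sub, sub_lie, lie_smul]
      push_cast
      module
    rw [leibniz]
    refine add_mem (lie_mem_lowerCentralSeries_succ a (ih hb)) ?_
    simpa only [Nat.add_comm 1 n] using
      lie_mem_lowerCentralSeries_add (dynkin_toWordAlgebra_sub_self_mem a) hb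

theorem mem_lowerCentralSeries_of_toWordAlgebra_mem {n : ℕ} (hn : IsUnit (n.factorial : R))
    {p : FreeLieAlgebra R ι} (hp : toWordAlgebra R ι p ∈ wordFiltration R ι (n + 1)) :
    p ∈ γ n := by
  induction n with
  | zero => exact LieSubmodule.mem_top p
  | succ n ih =>
    rw [Nat.factorial_succ, Nat.cast_mul, IsUnit.mul_iff] at hn
    have hp' : p ∈ γ n := ih hn.2 (wordFiltration_antitone (Nat.le_succ _) hp)
    have smul_mem : ((n + 1 : ℕ) : R) • p ∈ γ (n + 1) := by
      simpa using sub_mem (dynkin_mem_lowerCentralSeries hp) (dynkin_toWordAlgebra_sub_smul_mem hp')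
    exact ((γ (n + 1)).toSubmodule.smul_mem_iff_of_isUnit hn.1).1 smul_mem

end DynkinSpechtWever

section CommutatorSystem

theorem freeMonoid_eq_one_or_exists_mul_of (w : FreeMonoid ι) :
    w = 1 ∨ ∃ (v : FreeMonoid ι) (i : ι), w = v * FreeMonoid.of i := by
  simpa only [List.concat_eq_append] using! List.eq_nil_or_concat w.toList

theorem coeff_lie_letter_add_letter_lie (a b : WordAlgebra R ι) {j k m : ι} (hj : k ≠ j)
    (hm : k ≠ m) (w : FreeMonoid ι) :
    (⁅a, letter R k⁆ + ⁅letter R j, b⁆).coeff (FreeMonoid.of k * w * FreeMonoid.of m) =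
      -a.coeff (w * FreeMonoid.of m) -
        (b * letter R j).coeff (FreeMonoid.of k * w * FreeMonoid.of m) := by
  have a_letter := coeff_mul_letter_of_ne a (FreeMonoid.of k * w) hm.symm
  rw [mul_assoc] at a_letter
  have letter_b := coeff_letter_mul_of_ne b (w * FreeMonoid.of m) hj
  simp only [LieRing.of_associative_ring_bracket, MonoidAlgebra.coeff_add, MonoidAlgebra.coeff_sub,
    Finsupp.add_apply, Finsupp.sub_apply, a_letter, letter_b, mul_assoc,
    MonoidAlgebra.coeff_single_mul_mul, one_mul]
  abel

variable {n : ℕ} {f : ι → WordAlgebra R ι}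

theorem coeff_mul_of_eq_neg
    (h : ∀ j k, ⁅f j, letter R k⁆ + ⁅letter R j, f k⁆ ∈ wordFiltration R ι (n + 2))
    {j k m : ι} (hj : k ≠ j) (hm : k ≠ m) {w : FreeMonoid ι} (hw : w.length < n) :
    (f j).coeff (w * FreeMonoid.of m) =
      -(f k * letter R j).coeff (FreeMonoid.of k * w * FreeMonoid.of m) := by
  have hzero := mem_wordFiltration_iff.1 (h j k) (FreeMonoid.of k * w * FreeMonoid.of m)
    (by simp only [FreeMonoid.length_mul, FreeMonoid.length_of]; lia)
  rw [coeff_lie_letter_add_letter_lie _ _ hj hm] at hzero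
  linear_combination -hzero

theorem coeff_mul_of_eq_zero_of_ne (hι : 3 ≤ ENat.card ι)
    (h : ∀ j k, ⁅f j, letter R k⁆ + ⁅letter R j, f k⁆ ∈ wordFiltration R ι (n + 2))
    {j m : ι} (hm : m ≠ j) {w : FreeMonoid ι} (hw : w.length < n) :
    (f j).coeff (w * FreeMonoid.of m) = 0 := by
  obtain ⟨k, hkj, hkm⟩ := ENat.exists_ne_ne_of_three_le hι j m
  rw [coeff_mul_of_eq_neg h hkj hkm hw, coeff_mul_letter_of_ne _ _ hm, neg_zero]

theorem coeff_mul_of_self_eq_neg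
    (h : ∀ j k, ⁅f j, letter R k⁆ + ⁅letter R j, f k⁆ ∈ wordFiltration R ι (n + 2))
    {j k : ι} (hk : k ≠ j) {w : FreeMonoid ι} (hw : w.length < n) :
    (f j).coeff (w * FreeMonoid.of j) = -(f k).coeff (FreeMonoid.of k * w) := by
  rw [coeff_mul_of_eq_neg h hk hk hw, MonoidAlgebra.coeff_mul_single_mul, mul_one]

theorem coeff_of_self_eq_zero (hι : 3 ≤ ENat.card ι) (h2 : IsUnit (2 : R)) (hn : 0 < n)
    (h : ∀ j k, ⁅f j, letter R k⁆ + ⁅letter R j, f k⁆ ∈ wordFiltration R ι (n + 2)) (j : ι) :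
    (f j).coeff (FreeMonoid.of j) = 0 := by
  have neg_of_ne {i k : ι} (hik : k ≠ i) :
      (f i).coeff (FreeMonoid.of i) = -(f k).coeff (FreeMonoid.of k) := by
    simpa using coeff_mul_of_self_eq_neg h hik (w := 1) hn
  obtain ⟨k, hkj, -⟩ := ENat.exists_ne_ne_of_three_le hι j j
  obtain ⟨l, hlj, hlk⟩ := ENat.exists_ne_ne_of_three_le hι j k
  have two_mul_eq_zero : 2 * (f j).coeff (FreeMonoid.of j) = 0 := by
    linear_combination neg_of_ne hkj - neg_of_ne hlk + neg_of_ne hlj.symm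
  exact h2.mul_right_eq_zero.1 two_mul_eq_zero

theorem mem_wordFiltration_of_lie_letter_add_letter_lie_mem (hι : 3 ≤ ENat.card ι)
    (h2 : IsUnit (2 : R)) (hf : ∀ j, f j ∈ wordFiltration R ι 1)
    (h : ∀ j k, ⁅f j, letter R k⁆ + ⁅letter R j, f k⁆ ∈ wordFiltration R ι (n + 2)) (j : ι) :
    f j ∈ wordFiltration R ι (n + 1) := by
  refine mem_wordFiltration_iff.2 fun w hw => ?_
  obtain rfl | ⟨v, m, rfl⟩ := freeMonoid_eq_one_or_exists_mul_of w
  · exact mem_wordFiltration_iff.1 (hf j) 1 one_pos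
  have hv : v.length < n := by simpa using hw
  obtain hm | rfl := ne_or_eq m j
  · exact coeff_mul_of_eq_zero_of_ne hι h hm hv
  obtain rfl | ⟨u, p, rfl⟩ := freeMonoid_eq_one_or_exists_mul_of v
  · simpa using coeff_of_self_eq_zero hι h2 hv h m
  obtain ⟨k, hkm, hkp⟩ := ENat.exists_ne_ne_of_three_le hι m p
  have hku : (FreeMonoid.of k * u).length < n := by
    simpa [Nat.add_comm 1] using hv
  rw [coeff_mul_of_self_eq_neg h hkm hv, ← mul_assoc,
    coeff_mul_of_eq_zero_of_ne hι h hkp.symm hku, neg_zero]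

theorem mem_lowerCentralSeries_of_lie_of_add_of_lie_mem {c : ℕ} (hι : 3 ≤ ENat.card ι)
    (hc : IsUnit (c.factorial : R)) {v : ι → FreeLieAlgebra R ι}
    (h : ∀ j k, ⁅v j, FreeLieAlgebra.of R k⁆ + ⁅FreeLieAlgebra.of R j, v k⁆ ∈ γ c) (j : ι) :
    v j ∈ γ (c - 1) := by
  obtain hc1 | hc2 := le_or_gt c 1
  · rw [Nat.sub_eq_zero_of_le hc1]
    exact LieSubmodule.mem_top _
  obtain ⟨n, rfl⟩ := Nat.exists_eq_add_of_le' hc2.le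
  have isUnit_of_dvd {d : ℕ} (hd : d ∣ (n + 1).factorial) : IsUnit (d : R) :=
    isUnit_of_dvd_unit (Nat.cast_dvd_cast hd) hc
  have hn : IsUnit (n.factorial : R) := isUnit_of_dvd (Nat.factorial_dvd_factorial n.le_succ)
  have h2 : IsUnit (2 : R) := mod_cast isUnit_of_dvd (Nat.dvd_factorial two_pos hc2)
  refine mem_lowerCentralSeries_of_toWordAlgebra_mem hn ?_
  refine mem_wordFiltration_of_lie_letter_add_letter_lie_mem
    (f := fun i => toWordAlgebra R ι (v i)) hι h2
    (fun i => toWordAlgebra_mem_wordFiltration_one (v i)) (fun i k => ?_) j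
  simpa using toWordAlgebra_mem_wordFiltration (h i k)

end CommutatorSystem

end FreeNilpotentLieAlgebra

open FreeNilpotentLieAlgebra in
theorem free_nilpotent_system_solutions_central_general
    (R : Type*) [CommRing R] {ι : Type*} {c : ℕ} (hι : 3 ≤ ENat.card ι)
    (hc : IsUnit (c.factorial : R))
    (x : ι → FreeLieAlgebra R ι ⧸
      LieModule.lowerCentralSeries R (FreeLieAlgebra R ι) (FreeLieAlgebra R ι) c)
    (hx : ∀ i, x i = LieSubmodule.Quotient.mk (FreeLieAlgebra.of R i))
    (u : ι → FreeLieAlgebra R ι ⧸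
      LieModule.lowerCentralSeries R (FreeLieAlgebra R ι) (FreeLieAlgebra R ι) c)
    (h : ∀ j k, ⁅u j, x k⁆ + ⁅x j, u k⁆ = 0) (j : ι) :
    u j ∈ LieAlgebra.center R (FreeLieAlgebra R ι ⧸
      LieModule.lowerCentralSeries R (FreeLieAlgebra R ι) (FreeLieAlgebra R ι) c) := by
  obtain rfl : (fun i => LieSubmodule.Quotient.mk (FreeLieAlgebra.of R i)) = x :=
    funext fun i => (hx i).symm
  choose v hv using fun i => LieSubmodule.Quotient.surjective_mk' _ (u i)
  obtain rfl : (fun i => LieSubmodule.Quotient.mk (v i)) = u := funext hv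
  exact mk_mem_center_of_mem_lowerCentralSeries <|
    mem_lowerCentralSeries_of_lie_of_add_of_lie_mem hι hc
      (fun i k => LieSubmodule.Quotient.mk_eq_zero'.1 (h i k)) j

/-- Let `F_{g,c}` be the free-nilpotent Lie algebra on `g ≥ 3` generators of nilpotency
class `c ≥ 2` over a field of characteristic zero, with `x i` the images of the free
generators. Any symmetric family `(u i j)` of elements of `[F_{g,c}, F_{g,c}]` satisfying
`⁅u i j, x k⁆ + ⁅x j, u i k⁆ = 0` for all `i, j, k` lies in the center. -/
theorem free_nilpotent_system_solutions_central
    (K : Type*) [Field K] [CharZero K] (g c : ℕ) (hg : 3 ≤ g) (hc : 2 ≤ c)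
    (x : Fin g → FreeNilpotentLieAlgebra K g c)
    (hx : ∀ i, x i = LieSubmodule.Quotient.mk
      (N := LieModule.lowerCentralSeries K (FreeLieAlgebra K (Fin g)) (FreeLieAlgebra K (Fin g)) c)
      (FreeLieAlgebra.of K i))
    (u : Fin g → Fin g → FreeNilpotentLieAlgebra K g c)
    (hder : ∀ i j, u i j ∈
      ⁅(⊤ : LieIdeal K (FreeNilpotentLieAlgebra K g c)),
        (⊤ : LieIdeal K (FreeNilpotentLieAlgebra K g c))⁆)
    (hsymm : ∀ i j, u i j = u j i)
    (heq : ∀ i j k, ⁅u i j, x k⁆ + ⁅x j, u i k⁆ = 0) :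
    ∀ i j, u i j ∈ LieAlgebra.center K (FreeNilpotentLieAlgebra K g c) := fun i =>
  free_nilpotent_system_solutions_central_general K (by simpa using hg)
    (Nat.cast_ne_zero.2 c.factorial_ne_zero).isUnit x hx (u i) (heq i)
end
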